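/- Let L > 0, T > 0, k > 0 with 3 − 5k² > 0, α ∈ {0,1}, and D = (0,∞) × (0,L). Let u₁, u₂ : [0,T] × ℝ² → ℝ be smooth, each satisfying the 2D Kawahara equation u_t + α u_x + u u_x + u_{xxx} + u_{xyy} − u_{xxxxx} = 0 on [0,T] × D with boundary conditions u_i(t,0,y) = u_{ix}(t,0,y) = 0 and u_i(t,x,0) = u_i(t,x,L) = 0, and suppose that for i = 1,2, e^{kx/2} times u_i and e^{kx/2} times each of its spatial partial derivatives up to order five is square-integrable over D uniformly in t, these weighted quantities tend to 0 as x → ∞ uniformly, and the functions t ↦ ∫_D (u_i² + u_{ix}² + u_{iy}² + u_{ixy}²) dxdy are integrable on (0,T). If u₁(0,x,y) = u₂(0,x,y) for all (x,y) ∈ D, then u₁(t,x,y) = u₂(t,x,y) for all t ∈ [0,T] and (x,y) ∈ D. -/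

import Mathlib

open MeasureTheory Real

/-- Partial derivative with respect to the first spatial coordinate. -/
noncomputable def pdx (u : ℝ × ℝ → ℝ) : ℝ × ℝ → ℝ :=
  fun p => deriv (fun x => u (x, p.2)) p.1

/-- Partial derivative with respect to the second spatial coordinate. -/
noncomputable def pdy (u : ℝ × ℝ → ℝ) : ℝ × ℝ → ℝ :=
  fun p => deriv (fun y => u (p.1, y)) p.2

/-- Mixed spatial partial derivative `∂_x^i ∂_y^j`. -/
noncomputable def pd (i j : ℕ) (u : ℝ × ℝ → ℝ) : ℝ × ℝ → ℝ :=
  pdx^[i] (pdy^[j] u)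

/-- Hypotheses on a regular solution of the 2D Kawahara equation on the
half-strip `D = (0,∞) × (0,L)` in the uniqueness theorem. -/
def IsRegularKawaharaSolution (L T k α : ℝ) (D : Set (ℝ × ℝ))
    (u : ℝ → ℝ × ℝ → ℝ) : Prop :=
  ContDiff ℝ (⊤ : ℕ∞) (Function.uncurry u) ∧
  (∀ t ∈ Set.Icc (0:ℝ) T, ∀ p ∈ D,
    deriv (fun s => u s p) t + α * pdx (u t) p + u t p * pdx (u t) p +
      pd 3 0 (u t) p + pd 1 2 (u t) p - pd 5 0 (u t) p = 0) ∧
  (∀ t ∈ Set.Icc (0:ℝ) T, ∀ y ∈ Set.Ioo (0:ℝ) L,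
    u t (0, y) = 0 ∧ pdx (u t) (0, y) = 0) ∧
  (∀ t ∈ Set.Icc (0:ℝ) T, ∀ x > (0:ℝ),
    u t (x, 0) = 0 ∧ u t (x, L) = 0) ∧
  (∀ i j : ℕ, i + j ≤ 5 →
    (∀ t ∈ Set.Icc (0:ℝ) T,
      IntegrableOn (fun p => (Real.exp (k * p.1 / 2) * pd i j (u t) p) ^ 2) D) ∧
    ∃ C : ℝ, ∀ t ∈ Set.Icc (0:ℝ) T,
      (∫ p in D, (Real.exp (k * p.1 / 2) * pd i j (u t) p) ^ 2) ≤ C) ∧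
  (∀ i j : ℕ, i + j ≤ 5 →
    ∀ ε > 0, ∃ M : ℝ, ∀ x ≥ M, ∀ y : ℝ, ∀ t ∈ Set.Icc (0:ℝ) T,
      |Real.exp (k * x / 2) * pd i j (u t) (x, y)| ≤ ε) ∧
  IntegrableOn
    (fun t => ∫ p in D,
      ((u t p) ^ 2 + (pdx (u t) p) ^ 2 + (pdy (u t) p) ^ 2 +
        (pdx (pdy (u t)) p) ^ 2))
    (Set.Ioo (0:ℝ) T)

/-- The `t`-derivative on space-time. -/
noncomputable def dT (f : ℝ × ℝ × ℝ → ℝ) : ℝ × ℝ × ℝ → ℝ :=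
  fun p => fderiv ℝ f p (1, 0, 0)

/-- The `x`-derivative on space-time. -/
noncomputable def dX (f : ℝ × ℝ × ℝ → ℝ) : ℝ × ℝ × ℝ → ℝ :=
  fun p => fderiv ℝ f p (0, 1, 0)

/-- The `y`-derivative on space-time. -/
noncomputable def dY (f : ℝ × ℝ × ℝ → ℝ) : ℝ × ℝ × ℝ → ℝ :=
  fun p => fderiv ℝ f p (0, 0, 1)

lemma smooth_dir {f : ℝ × ℝ × ℝ → ℝ} (hf : ContDiff ℝ (⊤ : ℕ∞) f) (v : ℝ × ℝ × ℝ) :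
    ContDiff ℝ (⊤ : ℕ∞) (fun p => fderiv ℝ f p v) := by
  have h : ContDiff ℝ (⊤ : ℕ∞) (fderiv ℝ f) := hf.fderiv_right (by simp)
  exact h.clm_apply contDiff_const

lemma smooth_dT {f : ℝ × ℝ × ℝ → ℝ} (hf : ContDiff ℝ (⊤ : ℕ∞) f) :
    ContDiff ℝ (⊤ : ℕ∞) (dT f) := smooth_dir hf _

lemma smooth_dX {f : ℝ × ℝ × ℝ → ℝ} (hf : ContDiff ℝ (⊤ : ℕ∞) f) :
    ContDiff ℝ (⊤ : ℕ∞) (dX f) := smooth_dir hf _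

lemma smooth_dY {f : ℝ × ℝ × ℝ → ℝ} (hf : ContDiff ℝ (⊤ : ℕ∞) f) :
    ContDiff ℝ (⊤ : ℕ∞) (dY f) := smooth_dir hf _

lemma hasDerivAt_dT {f : ℝ × ℝ × ℝ → ℝ} (hf : ContDiff ℝ (⊤ : ℕ∞) f) (t x y : ℝ) :
    HasDerivAt (fun s => f (s, x, y)) (dT f (t, x, y)) t := by
  have h1 : HasFDerivAt f (fderiv ℝ f (t, x, y)) (t, x, y) :=
    (hf.differentiable (by simp) _).hasFDerivAt
  exact h1.comp_hasDerivAt t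
    ((hasDerivAt_id t).prodMk ((hasDerivAt_const t x).prodMk (hasDerivAt_const t y)))

lemma hasDerivAt_dX {f : ℝ × ℝ × ℝ → ℝ} (hf : ContDiff ℝ (⊤ : ℕ∞) f) (t x y : ℝ) :
    HasDerivAt (fun s => f (t, s, y)) (dX f (t, x, y)) x := by
  have h1 : HasFDerivAt f (fderiv ℝ f (t, x, y)) (t, x, y) :=
    (hf.differentiable (by simp) _).hasFDerivAt
  exact h1.comp_hasDerivAt x
    ((hasDerivAt_const x t).prodMk ((hasDerivAt_id x).prodMk (hasDerivAt_const x y)))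

lemma hasDerivAt_dY {f : ℝ × ℝ × ℝ → ℝ} (hf : ContDiff ℝ (⊤ : ℕ∞) f) (t x y : ℝ) :
    HasDerivAt (fun s => f (t, x, s)) (dY f (t, x, y)) y := by
  have h1 : HasFDerivAt f (fderiv ℝ f (t, x, y)) (t, x, y) :=
    (hf.differentiable (by simp) _).hasFDerivAt
  exact h1.comp_hasDerivAt y
    ((hasDerivAt_const y t).prodMk ((hasDerivAt_const y x).prodMk (hasDerivAt_id y)))

lemma dX_dY_comm {f : ℝ × ℝ × ℝ → ℝ} (hf : ContDiff ℝ (⊤ : ℕ∞) f) :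
    dX (dY f) = dY (dX f) := by
  funext p
  have h : ContDiff ℝ (⊤ : ℕ∞) (fderiv ℝ f) := hf.fderiv_right (by simp)
  have hd : DifferentiableAt ℝ (fderiv ℝ f) p := h.differentiable (by simp) p
  have hs : IsSymmSndFDerivAt ℝ f p :=
    hf.contDiffAt.isSymmSndFDerivAt (by simp only [minSmoothness_of_isRCLikeNormedField]; exact WithTop.coe_le_coe.2 (le_top : (2 : ℕ∞) ≤ ⊤))
  have e : ∀ v w, fderiv ℝ (fun q => fderiv ℝ f q v) p w = fderiv ℝ (fderiv ℝ f) p w v := by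
    intro v w
    rw [fderiv_clm_apply hd (differentiableAt_const _)]
    simp
  unfold dX dY
  rw [e, e]
  exact hs _ _

lemma dX_sub {f g : ℝ × ℝ × ℝ → ℝ} (hf : ContDiff ℝ (⊤ : ℕ∞) f)
    (hg : ContDiff ℝ (⊤ : ℕ∞) g) : dX (f - g) = dX f - dX g := by
  funext p
  simp only [dX, Pi.sub_apply]
  rw [fderiv_sub (hf.differentiable (by simp) _) (hg.differentiable (by simp) _)]
  rfl

lemma dY_sub {f g : ℝ × ℝ × ℝ → ℝ} (hf : ContDiff ℝ (⊤ : ℕ∞) f)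
    (hg : ContDiff ℝ (⊤ : ℕ∞) g) : dY (f - g) = dY f - dY g := by
  funext p
  simp only [dY, Pi.sub_apply]
  rw [fderiv_sub (hf.differentiable (by simp) _) (hg.differentiable (by simp) _)]
  rfl

lemma smooth_dX_iter {f : ℝ × ℝ × ℝ → ℝ} (hf : ContDiff ℝ (⊤ : ℕ∞) f) (i : ℕ) :
    ContDiff ℝ (⊤ : ℕ∞) (dX^[i] f) := by
  induction i with
  | zero => exact hf
  | succ i ih => rw [Function.iterate_succ_apply']; exact smooth_dX ih

lemma smooth_dY_iter {f : ℝ × ℝ × ℝ → ℝ} (hf : ContDiff ℝ (⊤ : ℕ∞) f) (i : ℕ) :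
    ContDiff ℝ (⊤ : ℕ∞) (dY^[i] f) := by
  induction i with
  | zero => exact hf
  | succ i ih => rw [Function.iterate_succ_apply']; exact smooth_dY ih

lemma iter_sub {f g : ℝ × ℝ × ℝ → ℝ} (hf : ContDiff ℝ (⊤ : ℕ∞) f)
    (hg : ContDiff ℝ (⊤ : ℕ∞) g) (i j : ℕ) :
    dX^[i] (dY^[j] (f - g)) = dX^[i] (dY^[j] f) - dX^[i] (dY^[j] g) := by
  have hY : dY^[j] (f - g) = dY^[j] f - dY^[j] g := by
    induction j with
    | zero => rfl
    | succ j ih =>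
      simp only [Function.iterate_succ_apply', ih]
      exact dY_sub (smooth_dY_iter hf j) (smooth_dY_iter hg j)
  rw [hY]
  induction i with
  | zero => rfl
  | succ i ih =>
    simp only [Function.iterate_succ_apply', ih]
    exact dX_sub (smooth_dX_iter (smooth_dY_iter hf j) i) (smooth_dX_iter (smooth_dY_iter hg j) i)

lemma pd_eq {u : ℝ → ℝ × ℝ → ℝ} (hu : ContDiff ℝ (⊤ : ℕ∞) (Function.uncurry u)) (i j : ℕ)
    (t : ℝ) (p : ℝ × ℝ) :
    pd i j (u t) p = dX^[i] (dY^[j] (Function.uncurry u)) (t, p.1, p.2) := by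
  have hY : ∀ j, pdy^[j] (u t) =
      fun p : ℝ × ℝ => dY^[j] (Function.uncurry u) (t, p.1, p.2) := by
    intro j
    induction j with
    | zero => rfl
    | succ j ih =>
      funext p
      simp only [Function.iterate_succ_apply', ih]
      exact (hasDerivAt_dY (smooth_dY_iter hu j) t p.1 p.2).deriv
  have hX : ∀ i, pdx^[i] (pdy^[j] (u t)) =
      fun p : ℝ × ℝ => dX^[i] (dY^[j] (Function.uncurry u)) (t, p.1, p.2) := by
    intro i
    induction i with
    | zero => exact hY j
    | succ i ih =>
      funext p
      simp only [Function.iterate_succ_apply', ih]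
      exact (hasDerivAt_dX (smooth_dX_iter (smooth_dY_iter hu j) i) t p.1 p.2).deriv
  unfold pd
  rw [hX]

lemma swap_cont {F : ℝ → ℝ → ℝ} (hF : Continuous (Function.uncurry F)) {a b c d : ℝ} :
    ∫ x in a..b, ∫ y in c..d, F x y = ∫ y in c..d, ∫ x in a..b, F x y := by
  apply MeasureTheory.intervalIntegral_intervalIntegral_swap
  apply IntegrableOn.mono_set (t := Set.uIcc a b ×ˢ Set.uIcc c d)
  · exact hF.continuousOn.integrableOn_compact (isCompact_uIcc.prod isCompact_uIcc)
  · exact Set.prod_mono Set.uIoc_subset_uIcc Set.uIoc_subset_uIcc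

lemma integral_nonpos_Ioo {g : ℝ → ℝ} (hg : Continuous g) {a b : ℝ} (hab : a ≤ b)
    (h : ∀ x ∈ Set.Ioo a b, g x ≤ 0) : ∫ x in a..b, g x ≤ 0 := by
  have := intervalIntegral.integral_mono_on_of_le_Ioo (μ := volume) hab
    (hg.intervalIntegrable a b) (intervalIntegrable_const (c := (0:ℝ))) h
  simpa using this

lemma box_lemma {F A B : ℝ × ℝ × ℝ → ℝ} (hF : ContDiff ℝ (⊤ : ℕ∞) F)
    (hA : ContDiff ℝ (⊤ : ℕ∞) A) (hB : ContDiff ℝ (⊤ : ℕ∞) B)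
    {τ R L δ : ℝ} (hτ : 0 ≤ τ) (hR : 0 ≤ R) (hL : 0 ≤ L)
    (hsum : ∀ t ∈ Set.Ioo 0 τ, ∀ x ∈ Set.Ioo 0 R, ∀ y ∈ Set.Ioo 0 L,
      dT F (t, x, y) + dX A (t, x, y) + dY B (t, x, y) ≤ 0)
    (hB0 : ∀ t ∈ Set.Ioo 0 τ, ∀ x ∈ Set.Ioo 0 R, B (t, x, 0) = 0 ∧ B (t, x, L) = 0)
    (hF0 : ∀ x ∈ Set.Ioo 0 R, ∀ y ∈ Set.Ioo 0 L, F (0, x, y) ≤ 0)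
    (hA0 : ∀ t ∈ Set.Ioo 0 τ, ∀ y ∈ Set.Ioo 0 L, A (t, 0, y) ≤ 0)
    (hAR : ∀ t ∈ Set.Ioo 0 τ, ∀ y ∈ Set.Ioo 0 L, - A (t, R, y) ≤ δ) :
    ∫ x in 0..R, ∫ y in 0..L, F (τ, x, y) ≤ τ * (L * δ) := by
  have cF := hF.continuous
  have cA := hA.continuous
  have cB := hB.continuous
  have cFt := (smooth_dT hF).continuous
  have cAx := (smooth_dX hA).continuous
  have cBy := (smooth_dY hB).continuous
  -- the triple integral is nonpositive
  have h1 : ∫ t in 0..τ, ∫ x in 0..R, ∫ y in 0..L,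
      (dT F (t, x, y) + dX A (t, x, y) + dY B (t, x, y)) ≤ 0 := by
    apply integral_nonpos_Ioo (by fun_prop) hτ
    intro t ht
    apply integral_nonpos_Ioo (by fun_prop) hR
    intro x hx
    apply integral_nonpos_Ioo (by fun_prop) hL
    intro y hy
    exact hsum t ht x hx y hy
  have h2 : ∫ t in 0..τ, ∫ x in 0..R, ∫ y in 0..L,
      (dT F (t, x, y) + dX A (t, x, y) + dY B (t, x, y)) =
      (∫ t in 0..τ, ∫ x in 0..R, ∫ y in 0..L, dT F (t, x, y)) +
      (∫ t in 0..τ, ∫ x in 0..R, ∫ y in 0..L, dX A (t, x, y)) +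
      (∫ t in 0..τ, ∫ x in 0..R, ∫ y in 0..L, dY B (t, x, y)) := by
    rw [← intervalIntegral.integral_add (Continuous.intervalIntegrable (by fun_prop) _ _)
      (Continuous.intervalIntegrable (by fun_prop) _ _),
      ← intervalIntegral.integral_add (Continuous.intervalIntegrable (by fun_prop) _ _)
      (Continuous.intervalIntegrable (by fun_prop) _ _)]
    refine intervalIntegral.integral_congr fun t _ => ?_
    rw [← intervalIntegral.integral_add (Continuous.intervalIntegrable (by fun_prop) _ _)
      (Continuous.intervalIntegrable (by fun_prop) _ _),
      ← intervalIntegral.integral_add (Continuous.intervalIntegrable (by fun_prop) _ _)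
      (Continuous.intervalIntegrable (by fun_prop) _ _)]
    refine intervalIntegral.integral_congr fun x _ => ?_
    rw [← intervalIntegral.integral_add (Continuous.intervalIntegrable (by fun_prop) _ _)
      (Continuous.intervalIntegrable (by fun_prop) _ _),
      ← intervalIntegral.integral_add (Continuous.intervalIntegrable (by fun_prop) _ _)
      (Continuous.intervalIntegrable (by fun_prop) _ _)]
  have hBI : 0 ≤ ∫ t in 0..τ, ∫ x in 0..R, ∫ y in 0..L, dY B (t, x, y) := by
    rw [← neg_nonpos, ← intervalIntegral.integral_neg]
    apply integral_nonpos_Ioo (by fun_prop) hτ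
    intro t ht
    rw [← intervalIntegral.integral_neg]
    apply integral_nonpos_Ioo (by fun_prop) hR
    intro x hx
    rw [intervalIntegral.integral_eq_sub_of_hasDerivAt (f := fun y => B (t, x, y))
      (fun y _ => hasDerivAt_dY hB t x y) (Continuous.intervalIntegrable (by fun_prop) _ _)]
    rw [(hB0 t ht x hx).1, (hB0 t ht x hx).2]
    simp
  have hAI : -(∫ t in 0..τ, ∫ x in 0..R, ∫ y in 0..L, dX A (t, x, y)) ≤ τ * (L * δ) := by
    rw [← sub_nonpos]
    have e1 : τ * (L * δ) = ∫ t in 0..τ, ∫ y in 0..L, δ := by simp; ring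
    rw [e1, ← intervalIntegral.integral_neg, ← intervalIntegral.integral_sub
      (Continuous.intervalIntegrable (by fun_prop) _ _)
      (Continuous.intervalIntegrable (by fun_prop) _ _)]
    apply integral_nonpos_Ioo (by fun_prop) hτ
    intro t ht
    rw [swap_cont (by fun_prop), ← intervalIntegral.integral_neg,
      ← intervalIntegral.integral_sub
      (Continuous.intervalIntegrable (by fun_prop) _ _)
      (Continuous.intervalIntegrable (by fun_prop) _ _)]
    apply integral_nonpos_Ioo (by fun_prop) hL
    intro y hy
    rw [intervalIntegral.integral_eq_sub_of_hasDerivAt (f := fun x => A (t, x, y))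
      (fun x _ => hasDerivAt_dX hA t x y) (Continuous.intervalIntegrable (by fun_prop) _ _)]
    have := hA0 t ht y hy
    have := hAR t ht y hy
    linarith
  have hFI : (∫ x in 0..R, ∫ y in 0..L, F (τ, x, y)) ≤
      ∫ t in 0..τ, ∫ x in 0..R, ∫ y in 0..L, dT F (t, x, y) := by
    rw [swap_cont (F := fun t x => ∫ y in 0..L, dT F (t, x, y)) (by fun_prop), ← sub_nonpos, ← intervalIntegral.integral_sub
      (Continuous.intervalIntegrable (by fun_prop) _ _)
      (Continuous.intervalIntegrable (by fun_prop) _ _)]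
    apply integral_nonpos_Ioo (by fun_prop) hR
    intro x hx
    rw [swap_cont (F := fun t y => dT F (t, x, y)) (by fun_prop), ← intervalIntegral.integral_sub
      (Continuous.intervalIntegrable (by fun_prop) _ _)
      (Continuous.intervalIntegrable (by fun_prop) _ _)]
    apply integral_nonpos_Ioo (by fun_prop) hL
    intro y hy
    rw [intervalIntegral.integral_eq_sub_of_hasDerivAt (f := fun t => F (t, x, y))
      (fun t _ => hasDerivAt_dT hF t x y) (Continuous.intervalIntegrable (by fun_prop) _ _)]
    have := hF0 x hx y hy
    linarith
  linarith

/-- The `x`-flux of the weighted energy identity. -/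
noncomputable def fluxA (k α E z z1 z2 z3 z4 w v : ℝ) : ℝ :=
  E * ((-2) * (z * z4) + 2 * (z1 * z3) + (-1) * (z2 * z2) + (2 * k) * (z * z3)
    + (-4 * k) * (z1 * z2) + (2 - 2 * k ^ 2) * (z * z2) + (3 * k ^ 2 - 1) * (z1 * z1)
    + (2 * k ^ 3 - 2 * k) * (z * z1) + (α + k ^ 2 - k ^ 4) * (z * z)
    + w * (z * z) + (-1) * (v * v))

lemma hasDerivAt_flux {E z z1 z2 z3 z4 w v : ℝ → ℝ} {k α x z5 w1 v1 : ℝ}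
    (hE : HasDerivAt E (k * E x) x) (h0 : HasDerivAt z (z1 x) x) (h1 : HasDerivAt z1 (z2 x) x)
    (h2 : HasDerivAt z2 (z3 x) x) (h3 : HasDerivAt z3 (z4 x) x) (h4 : HasDerivAt z4 z5 x)
    (hw : HasDerivAt w w1 x) (hv : HasDerivAt v v1 x) :
    HasDerivAt (fun s => fluxA k α (E s) (z s) (z1 s) (z2 s) (z3 s) (z4 s) (w s) (v s))
      (E x * (2 * z x * (α * z1 x + w x * z1 x + w1 * z x + z3 x - z5) - 2 * v x * v1
        - k * v x ^ 2 - 5 * k * z2 x ^ 2 - (3 * k - 5 * k ^ 3) * z1 x ^ 2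
        + z x ^ 2 * (k ^ 3 - k ^ 5 + α * k + k * w x - w1))) x := by
  have h := hE.mul (((((((((((h0.mul h4).const_mul (-2)).add ((h1.mul h3).const_mul 2)).add
    ((h2.mul h2).const_mul (-1))).add ((h0.mul h3).const_mul (2 * k))).add
    ((h1.mul h2).const_mul (-4 * k))).add ((h0.mul h2).const_mul (2 - 2 * k ^ 2))).add
    ((h1.mul h1).const_mul (3 * k ^ 2 - 1))).add ((h0.mul h1).const_mul (2 * k ^ 3 - 2 * k))).add
    ((h0.mul h0).const_mul (α + k ^ 2 - k ^ 4))).add (hw.mul (h0.mul h0)) |>.add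
    ((hv.mul hv).const_mul (-1)))
  refine HasDerivAt.congr_deriv (f := fun s => fluxA k α (E s) (z s) (z1 s) (z2 s) (z3 s) (z4 s) (w s) (v s)) h ?_
  simp only [Pi.add_apply, Pi.mul_apply]
  ring

lemma neg_coef_le {a b ε : ℝ} (c : ℝ) (ha : |a| ≤ ε) (hb : |b| ≤ ε) :
    -(c * (a * b)) ≤ |c| * ε ^ 2 := by
  calc -(c * (a * b)) ≤ |c * (a * b)| := neg_le_abs _
    _ = |c| * (|a| * |b|) := by rw [abs_mul, abs_mul]
    _ ≤ |c| * ε ^ 2 := by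
      have : |a| * |b| ≤ ε * ε :=
        mul_le_mul ha hb (abs_nonneg _) ((abs_nonneg _).trans ha)
      rw [sq]
      exact mul_le_mul_of_nonneg_left this (abs_nonneg _)

lemma neg_flux_le (k α Wb : ℝ) (hWb : 0 ≤ Wb) : ∃ K : ℝ, 0 ≤ K ∧
    ∀ (q g ε z z1 z2 z3 z4 w v : ℝ), 0 ≤ q → q ≤ 1 → |w| ≤ Wb →
      |g * z| ≤ ε → |g * z1| ≤ ε → |g * z2| ≤ ε → |g * z3| ≤ ε → |g * z4| ≤ ε → |g * v| ≤ ε →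
      -(fluxA k α (q * g ^ 2) z z1 z2 z3 z4 w v) ≤ K * ε ^ 2 := by
  refine ⟨|(-2 : ℝ)| + |(2 : ℝ)| + |(-1 : ℝ)| + |2 * k| + |-4 * k| + |2 - 2 * k ^ 2|
    + |3 * k ^ 2 - 1| + |2 * k ^ 3 - 2 * k| + |α + k ^ 2 - k ^ 4| + Wb + |(-1 : ℝ)|,
    by positivity, ?_⟩
  intro q g ε z z1 z2 z3 z4 w v hq0 hq1 hw h0 h1 h2 h3 h4 hv
  have a1 := neg_coef_le (-2) h0 h4
  have a2 := neg_coef_le 2 h1 h3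
  have a3 := neg_coef_le (-1) h2 h2
  have a4 := neg_coef_le (2 * k) h0 h3
  have a5 := neg_coef_le (-4 * k) h1 h2
  have a6 := neg_coef_le (2 - 2 * k ^ 2) h0 h2
  have a7 := neg_coef_le (3 * k ^ 2 - 1) h1 h1
  have a8 := neg_coef_le (2 * k ^ 3 - 2 * k) h0 h1
  have a9 := neg_coef_le (α + k ^ 2 - k ^ 4) h0 h0
  have a10 := neg_coef_le w h0 h0
  have a10' : |w| * ε ^ 2 ≤ Wb * ε ^ 2 := mul_le_mul_of_nonneg_right hw (sq_nonneg _)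
  have a11 := neg_coef_le (-1) hv hv
  set K := |(-2 : ℝ)| + |(2 : ℝ)| + |(-1 : ℝ)| + |2 * k| + |-4 * k| + |2 - 2 * k ^ 2|
    + |3 * k ^ 2 - 1| + |2 * k ^ 3 - 2 * k| + |α + k ^ 2 - k ^ 4| + Wb + |(-1 : ℝ)| with hK
  have hK0 : 0 ≤ K := by positivity
  have hX : -(fluxA k α 1 (g * z) (g * z1) (g * z2) (g * z3) (g * z4) w (g * v)) ≤ K * ε ^ 2 := by
    unfold fluxA
    rw [hK]
    linarith
  have e : -(fluxA k α (q * g ^ 2) z z1 z2 z3 z4 w v) =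
      q * -(fluxA k α 1 (g * z) (g * z1) (g * z2) (g * z3) (g * z4) w (g * v)) := by
    unfold fluxA; ring
  rw [e]
  calc q * _ ≤ q * (K * ε ^ 2) := mul_le_mul_of_nonneg_left hX hq0
    _ ≤ 1 * (K * ε ^ 2) := mul_le_mul_of_nonneg_right hq1 (by positivity)
    _ = _ := one_mul _

lemma energy_lemma {L T k α : ℝ} (hL : 0 < L) (hk : 0 < k) (hka : 3 - 5 * k ^ 2 > 0)
    {Z W : ℝ × ℝ × ℝ → ℝ} (hZ : ContDiff ℝ (⊤ : ℕ∞) Z) (hW : ContDiff ℝ (⊤ : ℕ∞) W)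
    (hpde : ∀ t ∈ Set.Icc 0 T, ∀ x > 0, ∀ y ∈ Set.Ioo 0 L,
      dT Z (t, x, y) + α * dX Z (t, x, y) + W (t, x, y) * dX Z (t, x, y)
        + dX W (t, x, y) * Z (t, x, y) + dX (dX (dX Z)) (t, x, y)
        + dX (dY (dY Z)) (t, x, y) - dX (dX (dX (dX (dX Z)))) (t, x, y) = 0)
    (hx0 : ∀ t ∈ Set.Icc 0 T, ∀ y ∈ Set.Ioo 0 L, Z (t, 0, y) = 0 ∧ dX Z (t, 0, y) = 0)
    (hy0 : ∀ t ∈ Set.Icc 0 T, ∀ x > 0, Z (t, x, 0) = 0 ∧ Z (t, x, L) = 0)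
    {Wb : ℝ} (hWb : ∀ t ∈ Set.Icc 0 T, ∀ x ≥ 0, ∀ y ∈ Set.Icc 0 L,
      |W (t, x, y)| ≤ Wb ∧ |dX W (t, x, y)| ≤ Wb)
    (hdec : ∀ i j : ℕ, i + j ≤ 5 → ∀ ε > 0, ∃ M : ℝ, ∀ x ≥ M, ∀ y : ℝ, ∀ t ∈ Set.Icc 0 T,
      |Real.exp (k * x / 2) * dX^[i] (dY^[j] Z) (t, x, y)| ≤ ε)
    (hdata0 : ∀ x > 0, ∀ y ∈ Set.Ioo 0 L, Z (0, x, y) = 0) :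
    ∀ t ∈ Set.Icc 0 T, ∀ x > 0, ∀ y ∈ Set.Ioo 0 L, Z (t, x, y) = 0 := by
  intro τ hτ x₀ hx₀ y₀ hy₀
  have hT0 : 0 ≤ T := hτ.1.trans hτ.2
  have hWb0 : 0 ≤ Wb := (abs_nonneg _).trans (hWb 0 ⟨le_rfl, hT0⟩ 0 le_rfl 0 ⟨le_rfl, hL.le⟩).1
  obtain ⟨K, hK0, hK⟩ := neg_flux_le k α Wb hWb0
  set C : ℝ := k ^ 3 + |α| * k + k * Wb + Wb with hC
  have hC0 : 0 ≤ C := by positivity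
  have s1 := smooth_dX hZ
  have s2 := smooth_dX s1
  have s3 := smooth_dX s2
  have s4 := smooth_dX s3
  have sy := smooth_dY hZ
  have sxy := smooth_dX sy
  set E : ℝ × ℝ × ℝ → ℝ := fun p => Real.exp (k * p.2.1 - C * p.1) with hE
  have sE : ContDiff ℝ (⊤ : ℕ∞) E := by rw [hE]; fun_prop
  set F : ℝ × ℝ × ℝ → ℝ := fun p => E p * (Z p * Z p) with hF
  have sF : ContDiff ℝ (⊤ : ℕ∞) F := by rw [hF]; fun_prop
  set A : ℝ × ℝ × ℝ → ℝ := fun p => fluxA k α (E p) (Z p) (dX Z p) (dX (dX Z) p)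
    (dX (dX (dX Z)) p) (dX (dX (dX (dX Z))) p) (W p) (dY Z p) with hA
  have sA : ContDiff ℝ (⊤ : ℕ∞) A := by rw [hA]; unfold fluxA; fun_prop
  set B : ℝ × ℝ × ℝ → ℝ := fun p => E p * (2 * (Z p * dX (dY Z) p)) with hB
  have sB : ContDiff ℝ (⊤ : ℕ∞) B := by rw [hB]; fun_prop
  have mainEst : ∀ ε > 0, ∃ R₁ : ℝ, ∀ R ≥ R₁, 0 < R →
      ∫ x in 0..R, ∫ y in 0..L, F (τ, x, y) ≤ τ * (L * (K * ε ^ 2)) := by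
    intro ε hε
    obtain ⟨M0, d0⟩ := hdec 0 0 (by norm_num) ε hε
    obtain ⟨M1, d1⟩ := hdec 1 0 (by norm_num) ε hε
    obtain ⟨M2, d2⟩ := hdec 2 0 (by norm_num) ε hε
    obtain ⟨M3, d3⟩ := hdec 3 0 (by norm_num) ε hε
    obtain ⟨M4, d4⟩ := hdec 4 0 (by norm_num) ε hε
    obtain ⟨M5, d5⟩ := hdec 0 1 (by norm_num) ε hε
    refine ⟨max (max (max M0 M1) (max M2 M3)) (max M4 M5), fun R hR hR0 => ?_⟩
    simp only [ge_iff_le, max_le_iff] at hR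
    obtain ⟨⟨⟨r0, r1⟩, r2, r3⟩, r4, r5⟩ := hR
    have hsub : ∀ t ∈ Set.Ioo 0 τ, t ∈ Set.Icc 0 T := fun t ht =>
      ⟨ht.1.le, ht.2.le.trans hτ.2⟩
    apply box_lemma sF sA sB hτ.1 hR0.le hL.le
    · intro t ht x hx y hy
      have ht' := hsub t ht
      have hxA := (hasDerivAt_dX sA t x y).unique
        (hasDerivAt_flux (E := fun s => E (t, s, y)) (k := k) (α := α)
          (by
            have := (((hasDerivAt_id x).const_mul k).sub_const (C * t)).exp
            refine HasDerivAt.congr_deriv (f := fun s => E (t, s, y)) this ?_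
            simp [hE]; ring)
          (hasDerivAt_dX hZ t x y) (hasDerivAt_dX s1 t x y) (hasDerivAt_dX s2 t x y)
          (hasDerivAt_dX s3 t x y) (hasDerivAt_dX s4 t x y) (hasDerivAt_dX hW t x y)
          (hasDerivAt_dX sy t x y))
      have hEt : HasDerivAt (fun s => E (s, x, y)) (-C * E (t, x, y)) t := by
        have := (((hasDerivAt_id t).const_mul C).const_sub (k * x)).exp
        refine HasDerivAt.congr_deriv (f := fun s => E (s, x, y)) this ?_
        simp [hE]; ring
      have hzt := hasDerivAt_dT hZ t x y
      have htF := (hasDerivAt_dT sF t x y).unique (hEt.mul (hzt.mul hzt))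
      have hzy := hasDerivAt_dY hZ t x y
      have hyB := (hasDerivAt_dY sB t x y).unique
        ((hasDerivAt_const y (E (t, x, y))).mul
          ((hzy.mul (hasDerivAt_dY sxy t x y)).const_mul 2))
      rw [htF, hxA, hyB, ← dX_dY_comm sy]
      have hp := hpde t ht' x hx.1 y hy
      obtain ⟨w0, w1⟩ := hWb t ht' x hx.1.le y ⟨hy.1.le, hy.2.le⟩
      have hEpos : 0 < E (t, x, y) := Real.exp_pos _
      generalize E (t, x, y) = e at *
      generalize dT Z (t, x, y) = zt at *
      generalize dX (dX (dX (dX (dX Z)))) (t, x, y) = z5 at *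
      generalize dX (dX (dX Z)) (t, x, y) = z3 at *
      generalize dX (dX Z) (t, x, y) = z2 at *
      generalize dX Z (t, x, y) = z1 at *
      generalize dX (dY (dY Z)) (t, x, y) = zxyy at *
      generalize dX (dY Z) (t, x, y) = zxy at *
      generalize dY Z (t, x, y) = zy at *
      generalize Z (t, x, y) = z at *
      generalize dX W (t, x, y) = w' at *
      generalize W (t, x, y) = w at *
      have hcoef : k ^ 3 - k ^ 5 + α * k + k * w - w' ≤ C := by
        have b1 : α * k ≤ |α| * k := mul_le_mul_of_nonneg_right (le_abs_self _) hk.le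
        have b2 : k * w ≤ k * Wb := mul_le_mul_of_nonneg_left ((le_abs_self _).trans w0) hk.le
        have b3 : -w' ≤ Wb := (neg_le_abs _).trans w1
        have b4 : 0 < k ^ 5 := by positivity
        linarith
      have c1 : 0 ≤ z ^ 2 * (C - (k ^ 3 - k ^ 5 + α * k + k * w - w')) :=
        mul_nonneg (sq_nonneg _) (by linarith)
      have c2 : 0 ≤ k * zy ^ 2 := by positivity
      have c3 : 0 ≤ 5 * k * z2 ^ 2 := by positivity
      have c4 : 0 ≤ (3 - 5 * k ^ 2) * (k * z1 ^ 2) := mul_nonneg hka.le (by positivity)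
      have hq : 0 ≤ e * (z ^ 2 * (C - (k ^ 3 - k ^ 5 + α * k + k * w - w')) + k * zy ^ 2
          + 5 * k * z2 ^ 2 + (3 - 5 * k ^ 2) * (k * z1 ^ 2)) := mul_nonneg hEpos.le (by linarith)
      have hzt : zt = -(α * z1 + w * z1 + w' * z + z3 + zxyy - z5) := by linarith
      rw [hzt]
      linarith
    · intro t ht x hx
      obtain ⟨b0, b1⟩ := hy0 t (hsub t ht) x hx.1
      simp [hB, b0, b1]
    · intro x hx y hy
      simp [hF, hdata0 x hx.1 y hy]
    · intro t ht y hy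
      obtain ⟨b0, b1⟩ := hx0 t (hsub t ht) y hy
      have b2 : dY Z (t, 0, y) = 0 := by
        have h1 : HasDerivAt (fun s => Z (t, 0, s)) 0 y := by
          refine (hasDerivAt_const y (0:ℝ)).congr_of_eventuallyEq ?_
          filter_upwards [Ioo_mem_nhds hy.1 hy.2] with s hs
          exact (hx0 t (hsub t ht) s hs).1
        exact (hasDerivAt_dY hZ t 0 y).unique h1
      have hEpos : 0 ≤ E (t, 0, y) := (Real.exp_pos _).le
      simp only [hA, fluxA, b0, b1, b2]
      have : 0 ≤ E (t, 0, y) * (dX (dX Z) (t, 0, y) * dX (dX Z) (t, 0, y)) :=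
        mul_nonneg hEpos (mul_self_nonneg _)
      linarith
    · intro t ht y hy
      have ht' := hsub t ht
      have eE : E (t, R, y) = Real.exp (-(C * t)) * Real.exp (k * R / 2) ^ 2 := by
        rw [← Real.exp_nat_mul, ← Real.exp_add]
        simp only [hE]
        congr 1
        push_cast
        ring
      simp only [hA]
      rw [eE]
      refine hK _ _ ε _ _ _ _ _ _ _ (Real.exp_pos _).le ?_
        (hWb t ht' R hR0.le y ⟨hy.1.le, hy.2.le⟩).1
        (d0 R r0 y t ht') (d1 R r1 y t ht') (d2 R r2 y t ht') (d3 R r3 y t ht')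
        (d4 R r4 y t ht') (d5 R r5 y t ht')
      rw [Real.exp_le_one_iff]
      have := mul_nonneg hC0 ht'.1
      linarith
  by_contra hne
  have cF := sF.continuous
  have Fnn : ∀ p, 0 ≤ F p := fun p => mul_nonneg (Real.exp_pos _).le (mul_self_nonneg _)
  have Gnn : ∀ x, 0 ≤ ∫ y in 0..L, F (τ, x, y) := fun x =>
    intervalIntegral.integral_nonneg hL.le fun y _ => Fnn _
  have hpos : 0 < ∫ x in 0..x₀, ∫ y in 0..L, F (τ, x, y) := by
    apply intervalIntegral.integral_pos hx₀
    · exact Continuous.continuousOn (by fun_prop)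
    · exact fun x _ => Gnn x
    · refine ⟨x₀, ⟨hx₀.le, le_rfl⟩, ?_⟩
      apply intervalIntegral.integral_pos hL
      · exact Continuous.continuousOn (by fun_prop)
      · exact fun y _ => Fnn _
      · exact ⟨y₀, ⟨hy₀.1.le, hy₀.2.le⟩, mul_pos (Real.exp_pos _) (mul_self_pos.mpr hne)⟩
  set c := ∫ x in 0..x₀, ∫ y in 0..L, F (τ, x, y) with hc
  set N := τ * (L * K) with hN
  have hN0 : 0 ≤ N := mul_nonneg hτ.1 (mul_nonneg hL.le hK0)
  have key : ∀ ε > 0, c ≤ N * ε ^ 2 := by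
    intro ε hε
    obtain ⟨R₁, hR₁⟩ := mainEst ε hε
    have h1 := hR₁ (max R₁ x₀) (le_max_left _ _) (hx₀.trans_le (le_max_right _ _))
    have h2 : c ≤ ∫ x in 0..(max R₁ x₀), ∫ y in 0..L, F (τ, x, y) := by
      apply intervalIntegral.integral_mono_interval le_rfl hx₀.le (le_max_right _ _)
      · exact Filter.Eventually.of_forall Gnn
      · exact Continuous.intervalIntegrable (by fun_prop) _ _
    calc c ≤ _ := h2
      _ ≤ _ := h1
      _ = N * ε ^ 2 := by rw [hN]; ring
  have hε : 0 < c / (N + 1 + c) := by positivity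
  have h1 := key _ hε
  have h2 : c / (N + 1 + c) ≤ 1 := by
    rw [div_le_one (by positivity)]; linarith
  have h3 : N * (c / (N + 1 + c)) ^ 2 ≤ N * (c / (N + 1 + c)) :=
    mul_le_mul_of_nonneg_left (by nlinarith) hN0
  have h4 : N * (c / (N + 1 + c)) < c := by
    rw [← mul_div_assoc, div_lt_iff₀ (by positivity)]
    nlinarith
  linarith

lemma exists_bound {k L T : ℝ} (hk : 0 < k) {f : ℝ × ℝ × ℝ → ℝ} (hf : Continuous f)
    (hdec : ∃ M : ℝ, ∀ x ≥ M, ∀ y : ℝ, ∀ t ∈ Set.Icc 0 T,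
      |Real.exp (k * x / 2) * f (t, x, y)| ≤ 1) :
    ∃ b : ℝ, ∀ t ∈ Set.Icc 0 T, ∀ x ≥ 0, ∀ y ∈ Set.Icc 0 L, |f (t, x, y)| ≤ b := by
  obtain ⟨M, hM⟩ := hdec
  obtain ⟨b, hb⟩ := ((isCompact_Icc (a := (0:ℝ)) (b := T)).prod
    ((isCompact_Icc (a := (0:ℝ)) (b := M)).prod
      (isCompact_Icc (a := (0:ℝ)) (b := L)))).exists_bound_of_continuousOn hf.continuousOn
  refine ⟨max b 1, fun t ht x hx y hy => ?_⟩
  by_cases h : x ≤ M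
  · exact (hb (t, x, y) ⟨ht, ⟨hx, h⟩, hy⟩).trans (le_max_left _ _)
  · have h1 := hM x (le_of_not_ge h) y t ht
    rw [abs_mul, abs_of_pos (Real.exp_pos _)] at h1
    have h2 : 1 ≤ Real.exp (k * x / 2) := Real.one_le_exp (by positivity)
    have h3 := le_mul_of_one_le_left (abs_nonneg (f (t, x, y))) h2
    exact (h3.trans h1).trans (le_max_right _ _)

/-- Uniqueness part of Theorem 3.1: two regular solutions of the
initial-boundary value problem for the 2D Kawahara equation on the half-strip
`D = (0,∞) × (0,L)` with the same initial data coincide. -/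
theorem kawahara_uniqueness (L T k α : ℝ)
    (hL : 0 < L) (hT : 0 < T) (hk : 0 < k) (hka : 3 - 5 * k ^ 2 > 0)
    (hα : α = 0 ∨ α = 1)
    (D : Set (ℝ × ℝ)) (hD : D = Set.Ioi (0:ℝ) ×ˢ Set.Ioo 0 L)
    (u₁ u₂ : ℝ → ℝ × ℝ → ℝ)
    (h₁ : IsRegularKawaharaSolution L T k α D u₁)
    (h₂ : IsRegularKawaharaSolution L T k α D u₂)
    (h0 : ∀ p ∈ D, u₁ 0 p = u₂ 0 p) :
    ∀ t ∈ Set.Icc (0:ℝ) T, ∀ p ∈ D, u₁ t p = u₂ t p := by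
  obtain ⟨s₁, e₁, bx₁, by₁, -, d₁, -⟩ := h₁
  obtain ⟨s₂, e₂, bx₂, by₂, -, d₂, -⟩ := h₂
  subst hD
  set U := Function.uncurry u₁ with hU
  set V := Function.uncurry u₂ with hV
  have sZ : ContDiff ℝ (⊤ : ℕ∞) (U - V) := s₁.sub s₂
  have sW : ContDiff ℝ (⊤ : ℕ∞) (fun p => 1 / 2 * (U p + V p)) := by fun_prop
  have px₁ : ∀ t p, pdx (u₁ t) p = dX U (t, p.1, p.2) := pd_eq s₁ 1 0
  have px₂ : ∀ t p, pdx (u₂ t) p = dX V (t, p.1, p.2) := pd_eq s₂ 1 0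
  have dW : ∀ t x y, dX (fun p => 1 / 2 * (U p + V p)) (t, x, y) =
      1 / 2 * (dX U (t, x, y) + dX V (t, x, y)) := fun t x y =>
    (hasDerivAt_dX sW t x y).unique
      (((hasDerivAt_dX s₁ t x y).add (hasDerivAt_dX s₂ t x y)).const_mul (1 / 2))
  have dTZ : ∀ t x y, dT (U - V) (t, x, y) = dT U (t, x, y) - dT V (t, x, y) := fun t x y =>
    (hasDerivAt_dT sZ t x y).unique ((hasDerivAt_dT s₁ t x y).sub (hasDerivAt_dT s₂ t x y))
  have it : ∀ i j p, dX^[i] (dY^[j] (U - V)) p = dX^[i] (dY^[j] U) p - dX^[i] (dY^[j] V) p :=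
    fun i j p => congrFun (iter_sub s₁ s₂ i j) p
  have g₁ : ∀ i j, i + j ≤ 5 → ∀ ε > 0, ∃ M : ℝ, ∀ x ≥ M, ∀ y : ℝ, ∀ t ∈ Set.Icc 0 T,
      |Real.exp (k * x / 2) * dX^[i] (dY^[j] U) (t, x, y)| ≤ ε := by
    intro i j hij ε hε
    obtain ⟨M, hM⟩ := d₁ i j hij ε hε
    refine ⟨M, fun x hx y t ht => ?_⟩
    have := hM x hx y t ht
    rwa [pd_eq s₁] at this
  have g₂ : ∀ i j, i + j ≤ 5 → ∀ ε > 0, ∃ M : ℝ, ∀ x ≥ M, ∀ y : ℝ, ∀ t ∈ Set.Icc 0 T,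
      |Real.exp (k * x / 2) * dX^[i] (dY^[j] V) (t, x, y)| ≤ ε := by
    intro i j hij ε hε
    obtain ⟨M, hM⟩ := d₂ i j hij ε hε
    refine ⟨M, fun x hx y t ht => ?_⟩
    have := hM x hx y t ht
    rwa [pd_eq s₂] at this
  obtain ⟨b1, hb1⟩ := exists_bound (L := L) hk s₁.continuous (g₁ 0 0 (by norm_num) 1 one_pos)
  obtain ⟨b2, hb2⟩ := exists_bound (L := L) hk s₂.continuous (g₂ 0 0 (by norm_num) 1 one_pos)
  obtain ⟨b3, hb3⟩ := exists_bound (L := L) hk (smooth_dX s₁).continuous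
    (g₁ 1 0 (by norm_num) 1 one_pos)
  obtain ⟨b4, hb4⟩ := exists_bound (L := L) hk (smooth_dX s₂).continuous
    (g₂ 1 0 (by norm_num) 1 one_pos)
  have key := energy_lemma (α := α) (Wb := max (1 / 2 * (b1 + b2)) (1 / 2 * (b3 + b4)))
    (T := T) hL hk hka sZ sW ?_ ?_ ?_ ?_ ?_ ?_
  · intro t ht p hp
    have := key t ht p.1 hp.1 p.2 hp.2
    exact sub_eq_zero.mp this
  · intro t ht x hx y hy
    have E₁ := e₁ t ht (x, y) ⟨hx, hy⟩
    have E₂ := e₂ t ht (x, y) ⟨hx, hy⟩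
    have t₁ : deriv (fun s => u₁ s (x, y)) t = dT U (t, x, y) := (hasDerivAt_dT s₁ t x y).deriv
    have t₂ : deriv (fun s => u₂ s (x, y)) t = dT V (t, x, y) := (hasDerivAt_dT s₂ t x y).deriv
    rw [t₁, px₁, pd_eq s₁, pd_eq s₁, pd_eq s₁] at E₁
    rw [t₂, px₂, pd_eq s₂, pd_eq s₂, pd_eq s₂] at E₂
    have i1 := it 1 0 (t, x, y)
    have i3 := it 3 0 (t, x, y)
    have i5 := it 5 0 (t, x, y)
    have i12 := it 1 2 (t, x, y)
    have i0 : (U - V) (t, x, y) = u₁ t (x, y) - u₂ t (x, y) := rfl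
    have iU : U (t, x, y) = u₁ t (x, y) := rfl
    have iV : V (t, x, y) = u₂ t (x, y) := rfl
    simp only [Function.iterate_succ, Function.iterate_zero, Function.comp_apply, id_eq]
      at i1 i3 i5 i12 E₁ E₂
    rw [dTZ, dW, i1, i3, i5, i12, i0, iU, iV]
    linarith
  · intro t ht y hy
    have i1 := it 1 0 (t, 0, y)
    simp only [Function.iterate_succ, Function.iterate_zero, Function.comp_apply, id_eq] at i1
    have q1 := bx₁ t ht y hy
    have q2 := bx₂ t ht y hy
    rw [px₁] at q1
    rw [px₂] at q2
    refine ⟨?_, ?_⟩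
    · change u₁ t (0, y) - u₂ t (0, y) = 0
      rw [q1.1, q2.1, sub_zero]
    · rw [i1, q1.2, q2.2, sub_zero]
  · intro t ht x hx
    have q1 := by₁ t ht x hx
    have q2 := by₂ t ht x hx
    refine ⟨?_, ?_⟩
    · change u₁ t (x, 0) - u₂ t (x, 0) = 0
      rw [q1.1, q2.1, sub_zero]
    · change u₁ t (x, L) - u₂ t (x, L) = 0
      rw [q1.2, q2.2, sub_zero]
  · intro t ht x hx y hy
    have r1 := hb1 t ht x hx y hy
    have r2 := hb2 t ht x hx y hy
    have r3 := hb3 t ht x hx y hy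
    have r4 := hb4 t ht x hx y hy
    rw [dW]
    refine ⟨le_max_of_le_left ?_, le_max_of_le_right ?_⟩
    · rw [abs_mul, abs_of_pos (by norm_num : (0:ℝ) < 1 / 2)]
      have := abs_add_le (U (t, x, y)) (V (t, x, y))
      linarith
    · rw [abs_mul, abs_of_pos (by norm_num : (0:ℝ) < 1 / 2)]
      have := abs_add_le (dX U (t, x, y)) (dX V (t, x, y))
      linarith
  · intro i j hij ε hε
    obtain ⟨M₁, m₁⟩ := g₁ i j hij (ε / 2) (by positivity)
    obtain ⟨M₂, m₂⟩ := g₂ i j hij (ε / 2) (by positivity)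
    refine ⟨max M₁ M₂, fun x hx y t ht => ?_⟩
    have n₁ := m₁ x ((le_max_left _ _).trans hx) y t ht
    have n₂ := m₂ x ((le_max_right _ _).trans hx) y t ht
    rw [it, mul_sub]
    have := abs_sub (Real.exp (k * x / 2) * dX^[i] (dY^[j] U) (t, x, y))
      (Real.exp (k * x / 2) * dX^[i] (dY^[j] V) (t, x, y))
    linarith
  · intro x hx y hy
    exact sub_eq_zero.mpr (h0 (x, y) ⟨hx, hy⟩)
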